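/- arXiv:1307.8108 — 3 statements merged into one kernel-verified Lean document; each statement's English description precedes it below -/
import Mathlib

section
/- Let (A, 𝔪) be a finite local Gorenstein k-algebra of socle degree j. Then: (a) Q_{m,0} = 0 for all m, and Q_{m,n} = 0 whenever m + n > j + 1; (b) the local Hilbert function satisfies h_A(t) = 0 for t > j; and (c) for 0 ≤ t ≤ j, h_A(t) = dim_k 𝔪^t/𝔪^{t+1} = Σ_{i=0}^{j−t} Δ_i(t) = Σ_{n=0}^{j+1} dim_k Q_{t,n}. -/
/-- `dim_k P/(P ∩ Q)`, the `k`-dimension of the image of the submodule `P` in `A/Q`. -/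
noncomputable def subquotDim (k : Type*) {A : Type*} [Field k] [CommRing A] [Algebra k A]
    (P Q : Submodule A A) : ℕ :=
  Module.finrank k (↥(P.restrictScalars k) ⧸
    (Submodule.comap (P.restrictScalars k).subtype (Q.restrictScalars k)))

/-- Iarrobino's `A_{m,n} = J^m ∩ (0 : J^n)`, with the convention `J^i = A` for `i ≤ 0`. -/
noncomputable def iaA {A : Type*} [CommRing A] (J : Ideal A) (m : ℕ) (n : ℤ) : Ideal A :=
  J ^ m ⊓ Submodule.torsionBySet A A ((J ^ n.toNat : Ideal A) : Set A)

/-- `dim_k Q_{m,n}` where `Q_{m,n} = A_{m,n}/(A_{m+1,n} + A_{m,n-1})`. -/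
noncomputable def iaQdim (k : Type*) {A : Type*} [Field k] [CommRing A] [Algebra k A]
    (J : Ideal A) (m : ℕ) (n : ℤ) : ℕ :=
  subquotDim k (iaA J m n) (iaA J (m + 1) n ⊔ iaA J m (n - 1))

/-- The Hilbert function decomposition `Δ_s(t) = dim_k Q_{t, j+1-(s+t)}` for `0 ≤ s ≤ j`,
`0 ≤ t ≤ j - s`, and `Δ_s(t) = 0` otherwise. -/
noncomputable def iaDelta (k : Type*) {A : Type*} [Field k] [CommRing A] [Algebra k A]
    (J : Ideal A) (j s t : ℕ) : ℕ :=
  if s ≤ j ∧ s + t ≤ j then iaQdim k J t ((j : ℤ) + 1 - (s + t)) else 0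

/-- The local Hilbert function `h(t) = dim_k J^t/J^(t+1)`. -/
noncomputable def hilbFn (k : Type*) {A : Type*} [Field k] [CommRing A] [Algebra k A]
    (J : Ideal A) (t : ℕ) : ℕ :=
  subquotDim k (J ^ t) (J ^ (t + 1))


section helpers
variable {k A : Type*} [Field k] [CommRing A] [Algebra k A]

/-- The `k`-dimension of an ideal. -/
noncomputable def idDim (k : Type*) {A : Type*} [Field k] [CommRing A] [Algebra k A]
    (P : Submodule A A) : ℕ := Module.finrank k (P.restrictScalars k)

lemma subquotDim_eq_zero {P Q : Submodule A A} (h : P ≤ Q) : subquotDim k P Q = 0 := by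
  unfold subquotDim
  have : Submodule.comap (P.restrictScalars k).subtype (Q.restrictScalars k) = ⊤ := by
    rw [eq_top_iff]
    intro x _
    exact h x.2
  rw [this]
  have : Subsingleton (↥(P.restrictScalars k) ⧸ (⊤ : Submodule k ↥(P.restrictScalars k))) :=
    Submodule.Quotient.subsingleton_iff.mpr rfl
  exact Module.finrank_zero_of_subsingleton

lemma subquotDim_add [FiniteDimensional k A] {P Q : Submodule A A} (h : Q ≤ P) :
    subquotDim k P Q + idDim k Q = idDim k P := by
  unfold subquotDim idDim
  have h' : Q.restrictScalars k ≤ P.restrictScalars k := h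
  rw [← (Submodule.comapSubtypeEquivOfLe h').finrank_eq]
  exact Submodule.finrank_quotient_add_finrank _

lemma idDim_sup_add_inf [FiniteDimensional k A] (P Q : Submodule A A) :
    idDim k (P ⊔ Q) + idDim k (P ⊓ Q) = idDim k P + idDim k Q := by
  unfold idDim
  have := Submodule.finrank_sup_add_finrank_inf_eq (P.restrictScalars k) (Q.restrictScalars k)
  have h2 : (P ⊔ Q).restrictScalars k = P.restrictScalars k ⊔ Q.restrictScalars k := by
    ext x
    simp only [Submodule.restrictScalars_mem, Submodule.mem_sup]
  rw [← this, h2]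
  rfl

lemma iaA_mono_left (J : Ideal A) (m : ℕ) (n : ℤ) : iaA J (m + 1) n ≤ iaA J m n :=
  inf_le_inf_right _ (Ideal.pow_le_pow_right (Nat.le_succ m))

lemma iaA_mono_right (J : Ideal A) (m : ℕ) {n n' : ℤ} (h : n ≤ n') : iaA J m n ≤ iaA J m n' :=
  inf_le_inf_left _ (Submodule.torsionBySet_le_torsionBySet_of_subset
    (Ideal.pow_le_pow_right (Int.toNat_le_toNat h)))

lemma iaA_inf (J : Ideal A) (m : ℕ) (n : ℤ) :
    iaA J (m + 1) n ⊓ iaA J m (n - 1) = iaA J (m + 1) (n - 1) := by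
  apply le_antisymm
  · exact le_inf (inf_le_left.trans inf_le_left) (inf_le_right.trans inf_le_right)
  · exact le_inf (iaA_mono_right J _ (by omega)) (iaA_mono_left J _ _)

lemma iaA_nonpos (J : Ideal A) (m : ℕ) {n : ℤ} (h : n ≤ 0) : iaA J m n = ⊥ := by
  rw [eq_bot_iff]
  intro x hx
  have h2 := hx.2
  rw [Int.toNat_of_nonpos h, pow_zero] at h2
  have := (Submodule.mem_torsionBySet_iff _ _).mp h2 ⟨1, by simp⟩
  simpa using this

lemma iaA_large {J : Ideal A} {j : ℕ} (hj : J ^ (j + 1) = ⊥) (m : ℕ) {n : ℤ}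
    (h : (j : ℤ) + 1 ≤ m + n) : iaA J m n = J ^ m := by
  apply le_antisymm inf_le_left
  refine le_inf le_rfl ?_
  intro x hx
  rw [Submodule.mem_torsionBySet_iff]
  rintro ⟨a, ha⟩
  have h1 : a * x ∈ J ^ (n.toNat + m) := by
    rw [pow_add]; exact Ideal.mul_mem_mul ha hx
  have h2 : J ^ (n.toNat + m) ≤ J ^ (j + 1) := Ideal.pow_le_pow_right (by omega)
  have := h2 h1
  rw [hj] at this
  simpa using this

lemma iaQdim_zero (J : Ideal A) (m : ℕ) : iaQdim k J m 0 = 0 := by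
  apply subquotDim_eq_zero
  rw [iaA_nonpos J m le_rfl]
  exact bot_le

lemma iaQdim_rec [FiniteDimensional k A] (J : Ideal A) (m : ℕ) (n : ℤ) :
    (iaQdim k J m n : ℤ) = ((idDim k (iaA J m n) : ℤ) - idDim k (iaA J (m + 1) n)) -
      ((idDim k (iaA J m (n - 1)) : ℤ) - idDim k (iaA J (m + 1) (n - 1))) := by
  have h1 := subquotDim_add (k := k) (P := iaA J m n)
    (Q := iaA J (m + 1) n ⊔ iaA J m (n - 1))
    (sup_le (iaA_mono_left J m n) (iaA_mono_right J m (by omega)))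
  have h2 := idDim_sup_add_inf (k := k) (iaA J (m + 1) n) (iaA J m (n - 1))
  rw [iaA_inf] at h2
  unfold iaQdim
  omega

lemma iaQdim_sum [FiniteDimensional k A] (J : Ideal A) (m N : ℕ) :
    ((∑ n ∈ Finset.range (N + 1), iaQdim k J m (n : ℤ) : ℕ) : ℤ) =
      (idDim k (iaA J m N) : ℤ) - idDim k (iaA J (m + 1) N) := by
  induction N with
  | zero =>
    simp [iaQdim_zero, iaA_nonpos]
  | succ N ih =>
    rw [Finset.sum_range_succ, Nat.cast_add, ih, iaQdim_rec]
    have : ((N + 1 : ℕ) : ℤ) - 1 = N := by push_cast; ring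
    rw [this]
    ring

lemma hilbFn_eq_sum [FiniteDimensional k A] {J : Ideal A} {j : ℕ} (hj : J ^ (j + 1) = ⊥)
    (t N : ℕ) (h : j + 1 ≤ t + N) :
    hilbFn k J t = ∑ n ∈ Finset.range (N + 1), iaQdim k J t (n : ℤ) := by
  have h1 := iaQdim_sum (k := k) J t N
  rw [iaA_large hj t (by omega), iaA_large hj (t + 1) (by push_cast; omega)] at h1
  have h2 := subquotDim_add (k := k) (P := J ^ t) (Q := J ^ (t + 1))
    (Ideal.pow_le_pow_right (Nat.le_succ t))
  unfold hilbFn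
  omega

end helpers

/-- Let `(A, 𝔪)` be a finite local Gorenstein `k`-algebra of socle
degree `j`. Then: (a) `Q_{m,0} = 0` for all `m`, and `Q_{m,n} = 0` whenever
`m + n > j + 1`; (b) the local Hilbert function satisfies `h_A(t) = 0` for `t > j`; and
(c) for `0 ≤ t ≤ j`,
`h_A(t) = dim_k 𝔪^t/𝔪^(t+1) = Σ_{i=0}^{j-t} Δ_i(t) = Σ_{n=0}^{j+1} dim_k Q_{t,n}`. -/
theorem deformations_stmt13 {k A : Type*} [Field k]
    [CommRing A] [Algebra k A] [IsLocalRing A] [FiniteDimensional k A]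
    -- the residue field A/𝔪 is k
    (hres : Function.Bijective (algebraMap k (IsLocalRing.ResidueField A)))
    -- the socle soc(A) has k-dimension 1 (A is Gorenstein)
    (hsoc : Module.finrank k
      ↥((Submodule.torsionBySet A A
          ((IsLocalRing.maximalIdeal A : Ideal A) : Set A)).restrictScalars k) = 1)
    -- j is the socle degree of A
    (j : ℕ) (hj : IsLocalRing.maximalIdeal A ^ j ≠ ⊥)
    (hj' : IsLocalRing.maximalIdeal A ^ (j + 1) = ⊥) :
    -- (a)
    (∀ m : ℕ, iaQdim k (IsLocalRing.maximalIdeal A) m 0 = 0) ∧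
    (∀ m n : ℕ, (j : ℤ) + 1 < (m : ℤ) + n →
      iaQdim k (IsLocalRing.maximalIdeal A) m (n : ℤ) = 0) ∧
    -- (b)
    (∀ t : ℕ, j < t → hilbFn k (IsLocalRing.maximalIdeal A) t = 0) ∧
    -- (c)
    (∀ t : ℕ, t ≤ j →
      hilbFn k (IsLocalRing.maximalIdeal A) t =
        ∑ i ∈ Finset.range (j - t + 1), iaDelta k (IsLocalRing.maximalIdeal A) j i t) ∧
    (∀ t : ℕ, t ≤ j →
      hilbFn k (IsLocalRing.maximalIdeal A) t =
        ∑ n ∈ Finset.range (j + 2), iaQdim k (IsLocalRing.maximalIdeal A) t (n : ℤ)) := by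
  refine ⟨fun m => iaQdim_zero _ m, ?_, ?_, ?_, ?_⟩
  · intro m n h
    apply subquotDim_eq_zero
    rw [iaA_large hj' m (by omega), iaA_large hj' m (n := (n : ℤ) - 1) (by omega)]
    exact le_sup_right
  · intro t ht
    apply subquotDim_eq_zero
    have : IsLocalRing.maximalIdeal A ^ t ≤ ⊥ := hj' ▸ Ideal.pow_le_pow_right ht
    exact this.trans bot_le
  · intro t ht
    rw [hilbFn_eq_sum hj' t (j - t + 1) (by omega), Finset.sum_range_succ', Nat.cast_zero,
      iaQdim_zero, add_zero, ← Finset.sum_range_reflect]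
    refine Finset.sum_congr rfl fun i hi => ?_
    have hi' := Finset.mem_range.mp hi
    rw [iaDelta, if_pos (by omega)]
    congr 1
    omega
  · intro t ht
    exact hilbFn_eq_sum hj' t (j + 1) (by omega)
end

section
/- Standard form of a dual socle generator: let k be a field of characteristic zero and (A, 𝔪) a finite local Gorenstein k-algebra of socle degree j with n = h_A(1) = dim_k 𝔪/𝔪². Let Δ be the Hilbert function decomposition of A and set e(i) = Σ_{t=0}^{i} Δ_t(1). Then there exists a polynomial f = f₀ + f₁ + ⋯ + f_j ∈ k[x₁,…,xₙ], with each f_i homogeneous of degree i, such that A ≅ k[y₁,…,yₙ]/Ann(f) as k-algebras and f_i ∈ k[x₁,…,x_{e(j−i)}] (i.e. f_i involves only the first e(j−i) variables) for every i; moreover if j ≥ 2 one can additionally take f₀ = f₁ = 0. -/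
/-- The apolarity action of `T = k[y₁,…,yₙ]` on `S = k[x₁,…,xₙ]`, in which `yᵢ` acts as
`∂/∂xᵢ`. -/
noncomputable def apolar {k : Type*} [CommSemiring k] {n : ℕ}
    (D f : MvPolynomial (Fin n) k) : MvPolynomial (Fin n) k :=
  ∑ a ∈ D.support, ∑ b ∈ f.support,
    MvPolynomial.monomial (b - a)
      (D.coeff a * f.coeff b * ∏ i : Fin n, ((b i).descFactorial (a i) : k))

/-- Adapted families: a family adapted to a filtration `F` modulo `N`. -/
lemma adapted_family {k E : Type*} [Field k] [AddCommGroup E] [Module k E]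
    [FiniteDimensional k E] (N : Submodule k E) (F G : ℕ → Submodule k E)
    (h0 : F 0 ≤ N) (hF : Monotone F) (hG : ∀ q, G q ≤ N ⊔ F q) (P : ℕ) :
    ∃ b : ℕ → E, ∀ p ≤ P,
      (∀ v < ∑ q ∈ Finset.range p, Module.finrank k
          (↥(F (q+1)) ⧸ (G q).comap (F (q+1)).subtype), b v ∈ F p) ∧
      F p ≤ Submodule.span k (b '' Set.Iio (∑ q ∈ Finset.range p, Module.finrank k
          (↥(F (q+1)) ⧸ (G q).comap (F (q+1)).subtype))) ⊔ N := by
  set d : ℕ → ℕ := fun p => ∑ q ∈ Finset.range p, Module.finrank k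
          (↥(F (q+1)) ⧸ (G q).comap (F (q+1)).subtype) with hd
  have hdm : Monotone d := by
    intro p q hpq
    exact Finset.sum_le_sum_of_subset (Finset.range_mono hpq)
  change ∃ b : ℕ → E, ∀ p ≤ P, (∀ v < d p, b v ∈ F p) ∧
      F p ≤ Submodule.span k (b '' Set.Iio (d p)) ⊔ N
  induction P with
  | zero =>
    refine ⟨fun _ => 0, fun p hp => ?_⟩
    obtain rfl : p = 0 := by omega
    exact ⟨fun _ _ => zero_mem _, h0.trans le_sup_right⟩
  | succ P ih =>
    obtain ⟨b, hb⟩ := ih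
    let Q := ↥(F (P+1)) ⧸ (G P).comap (F (P+1)).subtype
    let c : Module.Basis (Fin (Module.finrank k Q)) k Q := Module.finBasis k Q
    have hlift : ∀ i, ∃ x : F (P+1), Submodule.Quotient.mk x = c i :=
      fun i => Submodule.Quotient.mk_surjective _ (c i)
    choose l hl using hlift
    have hds : d (P+1) = d P + Module.finrank k Q := by
      simp only [hd, Finset.sum_range_succ]; rfl
    let b' : ℕ → E := fun v => if h : v < d P then b v else
      if h2 : v - d P < Module.finrank k Q then (l ⟨v - d P, h2⟩ : E) else 0
    have hbb : ∀ v, v < d P → b' v = b v := fun v hv => by simp [b', hv]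
    have himg : ∀ p ≤ P, b' '' Set.Iio (d p) = b '' Set.Iio (d p) := by
      intro p hp
      apply Set.image_congr
      intro v hv
      exact hbb v (lt_of_lt_of_le hv (hdm hp))
    refine ⟨b', fun p hp => ?_⟩
    rcases Nat.lt_or_ge p (P+1) with hlt | hge
    · have hpP : p ≤ P := by omega
      rw [himg p hpP]
      refine ⟨fun v hv => ?_, (hb p hpP).2⟩
      rw [hbb v (lt_of_lt_of_le hv (hdm hpP))]
      exact (hb p hpP).1 v hv
    · obtain rfl : p = P + 1 := by omega
      constructor
      · intro v hv
        by_cases h : v < d P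
        · rw [hbb v h]
          exact hF (Nat.le_succ P) ((hb P le_rfl).1 v h)
        · have h2 : v - d P < Module.finrank k Q := by omega
          simp only [b', h, h2, dif_pos, dif_neg, not_false_eq_true]
          exact (l _).2
      · intro x hx
        have hGP : G P ≤ Submodule.span k (b' '' Set.Iio (d (P+1))) ⊔ N := by
          refine (hG P).trans (sup_le le_sup_right ((hb P le_rfl).2.trans ?_))
          rw [← himg P le_rfl]
          exact sup_le_sup_right (Submodule.span_mono (Set.image_mono
            (Set.Iio_subset_Iio (hdm (Nat.le_succ P))))) _
        obtain ⟨r, hr⟩ : ∃ r : Fin (Module.finrank k Q) → k,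
            ∑ i, r i • c i = Submodule.Quotient.mk (⟨x, hx⟩ : F (P+1)) := ⟨_, c.sum_repr _⟩
        have h3 : (⟨x, hx⟩ : F (P+1)) - ∑ i, r i • l i
            ∈ (G P).comap (F (P+1)).subtype := by
          rw [← Submodule.Quotient.mk_eq_zero, Submodule.Quotient.mk_sub, ← hr, sub_eq_zero,
            ← Submodule.mkQ_apply, map_sum]
          apply Finset.sum_congr rfl
          intro i _
          rw [map_smul, Submodule.mkQ_apply, hl]
        rw [Submodule.mem_comap] at h3
        have h4 := hGP h3
        have h5 : (F (P+1)).subtype (∑ i, r i • l i)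
            ∈ Submodule.span k (b' '' Set.Iio (d (P+1))) ⊔ N := by
          rw [map_sum]
          refine Submodule.sum_mem _ fun i _ => ?_
          rw [map_smul]
          refine Submodule.smul_mem _ _ (Submodule.mem_sup_left (Submodule.subset_span ?_))
          refine ⟨d P + i, ?_, ?_⟩
          · simp only [Set.mem_Iio, hds]; have := i.2; omega
          · have : ¬ (d P + (i:ℕ) < d P) := by omega
            simp [b']
        have h6 := Submodule.add_mem _ h4 h5
        rw [← map_add, sub_add_cancel] at h6
        exact h6

lemma finrank_quot_comap {k E : Type*} [Field k] [AddCommGroup E] [Module k E]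
    [FiniteDimensional k E] (F G : Submodule k E) :
    Module.finrank k (↥F ⧸ G.comap F.subtype) + Module.finrank k ↥(F ⊓ G) =
      Module.finrank k F := by
  rw [← Submodule.finrank_quotient_add_finrank (G.comap F.subtype)]
  congr 1
  rw [← Submodule.map_comap_subtype]
  exact (LinearEquiv.finrank_eq (Submodule.equivMapOfInjective _ F.injective_subtype _)).symm

/-- Dimension count for the filtration. -/
lemma adapted_dim {k E : Type*} [Field k] [AddCommGroup E] [Module k E]
    [FiniteDimensional k E] (N : Submodule k E) (F : ℕ → Submodule k E)
    (h0 : F 0 ≤ N) (hF : Monotone F) (P : ℕ) :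
    ∑ q ∈ Finset.range P, Module.finrank k
          (↥(F (q+1)) ⧸ ((N ⊓ F (q+1)) ⊔ F q).comap (F (q+1)).subtype) =
      Module.finrank k (↥(F P) ⧸ N.comap (F P).subtype) := by
  induction P with
  | zero =>
    have := finrank_quot_comap (F 0) N
    rw [inf_eq_left.2 h0] at this
    simp only [Finset.range_zero, Finset.sum_empty]
    omega
  | succ P ih =>
    rw [Finset.sum_range_succ, ih]
    have h1 := finrank_quot_comap (F P) N
    have h2 := finrank_quot_comap (F (P+1)) N
    have h3 := finrank_quot_comap (F (P+1)) ((N ⊓ F (P+1)) ⊔ F P)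
    have hm : F P ≤ F (P+1) := hF (Nat.le_succ P)
    rw [inf_eq_right.2 (sup_le inf_le_right hm)] at h3
    have h4 := Submodule.finrank_sup_add_finrank_inf_eq (N ⊓ F (P+1)) (F P)
    have h5 : N ⊓ F (P+1) ⊓ F P = F P ⊓ N := by
      rw [inf_assoc, inf_eq_right.2 hm, inf_comm]
    rw [h5, inf_comm N] at h4
    rw [inf_comm N] at h3 ⊢
    omega

/-- The monomial `y^a`. -/
noncomputable def monY {A : Type*} [CommRing A] {n : ℕ} (y : Fin n → A) (a : Fin n →₀ ℕ) : A :=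
  ∏ v, y v ^ a v

lemma monY_add {A : Type*} [CommRing A] {n : ℕ} (y : Fin n → A) (a b : Fin n →₀ ℕ) :
    monY y (a + b) = monY y a * monY y b := by
  simp [monY, pow_add, Finset.prod_mul_distrib]

lemma monY_mem {A : Type*} [CommRing A] {n : ℕ} (y : Fin n → A) (J : Ideal A)
    (hy : ∀ v, y v ∈ J) (a : Fin n →₀ ℕ) : monY y a ∈ J ^ (∑ v, a v) := by
  rw [← Finset.prod_pow_eq_pow_sum]
  exact Ideal.prod_mem_prod fun v _ => Ideal.pow_mem_pow (hy v) _

lemma monY_single {A : Type*} [CommRing A] {n : ℕ} (y : Fin n → A) (v : Fin n) :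
    monY y (Finsupp.single v 1) = y v := by
  rw [monY, Finset.prod_eq_single v] <;> simp +contextual [eq_comm]

lemma aeval_eq_monY {k A : Type*} [Field k] [CommRing A] [Algebra k A] {n : ℕ} (y : Fin n → A)
    (D : MvPolynomial (Fin n) k) :
    MvPolynomial.aeval y D = ∑ a ∈ D.support, D.coeff a • monY y a := by
  rw [MvPolynomial.aeval_def, MvPolynomial.eval₂_eq']
  simp [monY, Algebra.smul_def]

lemma coeff_apolar {k : Type*} [Field k] {n : ℕ} (D f : MvPolynomial (Fin n) k)
    (c : Fin n →₀ ℕ) :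
    (apolar D f).coeff c = ∑ a ∈ D.support, D.coeff a * f.coeff (a + c) *
      ∏ i : Fin n, (((a + c) i).descFactorial (a i) : k) := by
  classical
  rw [apolar, MvPolynomial.coeff_sum]
  refine Finset.sum_congr rfl fun a _ => ?_
  rw [MvPolynomial.coeff_sum]
  rw [Finset.sum_eq_single (a + c)]
  · simp
  · intro b _ hb
    rw [MvPolynomial.coeff_monomial]
    split_ifs with h
    · have : ¬ a ≤ b := by
        intro hab
        apply hb
        rw [← h, add_tsub_cancel_of_le hab]
      rw [Finsupp.le_def] at this
      push Not at this
      obtain ⟨i, hi⟩ := this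
      rw [Finset.prod_eq_zero (Finset.mem_univ i), mul_zero]
      rw [Nat.descFactorial_of_lt hi, Nat.cast_zero]
    · rfl
  · intro h
    rw [MvPolynomial.notMem_support_iff] at h
    simp [h]

/-- The coefficient of the dual generator. -/
noncomputable def dualCoeff {k A : Type*} [Field k] [CommRing A] [Algebra k A] {n : ℕ}
    (y : Fin n → A) (φ : A →ₗ[k] k) (a : Fin n →₀ ℕ) : k :=
  φ (monY y a) / ∏ v, ((a v).factorial : k)

lemma coeff_apolar_dual {k A : Type*} [Field k] [CharZero k] [CommRing A] [Algebra k A] {n : ℕ}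
    (y : Fin n → A) (φ : A →ₗ[k] k) (D f : MvPolynomial (Fin n) k)
    (hf : ∀ a, f.coeff a = dualCoeff y φ a) (c : Fin n →₀ ℕ) :
    (apolar D f).coeff c =
      φ (MvPolynomial.aeval y D * monY y c) / ∏ v, ((c v).factorial : k) := by
  rw [coeff_apolar, aeval_eq_monY, Finset.sum_mul, map_sum, Finset.sum_div]
  refine Finset.sum_congr rfl fun a _ => ?_
  rw [hf, dualCoeff, smul_mul_assoc, map_smul, ← monY_add, smul_eq_mul]
  have h1 : (∏ v, (((a + c) v).factorial : k)) =
      (∏ v, ((c v).factorial : k)) * ∏ i : Fin n, (((a + c) i).descFactorial (a i) : k) := by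
    rw [← Finset.prod_mul_distrib]
    refine Finset.prod_congr rfl fun i _ => ?_
    have := Nat.factorial_mul_descFactorial (n := (a + c) i) (k := a i) (by simp)
    rw [← this]
    simp
  have hne : ∀ b : Fin n →₀ ℕ, (∏ v, ((b v).factorial : k)) ≠ 0 := fun b =>
    Finset.prod_ne_zero_iff.2 fun v _ => Nat.cast_ne_zero.2 (Nat.factorial_ne_zero _)
  have h2 := hne (a + c)
  rw [h1] at h2 ⊢
  have h3 := left_ne_zero_of_mul h2
  have h4 := right_ne_zero_of_mul h2
  field_simp

/-- surjectivity of evaluation at generators of the maximal ideal -/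
lemma aeval_surj {k A : Type*} [Field k] [CommRing A] [Algebra k A] {n : ℕ}
    (J : Ideal A) (N : ℕ) (hN : J ^ N = ⊥) (hk : ∀ a : A, ∃ c : k, a - algebraMap k A c ∈ J)
    (y : Fin n → A) (hy : ∀ v, y v ∈ J) (hJ : J ≤ Ideal.span (Set.range y)) :
    Function.Surjective (MvPolynomial.aeval (R := k) y) := by
  have key : ∀ i : ℕ, ∀ a : A, ∃ p : MvPolynomial (Fin n) k, a - MvPolynomial.aeval y p ∈ J ^ i := by
    intro i
    induction i with
    | zero => intro a; exact ⟨0, by simp⟩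
    | succ i ih =>
      intro a
      obtain ⟨c, hc⟩ := hk a
      obtain ⟨g, hg⟩ := (Ideal.mem_span_range_iff_exists_fun).1 (hJ hc)
      choose p hp using fun v => ih (g v)
      refine ⟨MvPolynomial.C c + ∑ v, p v * MvPolynomial.X v, ?_⟩
      have : a - MvPolynomial.aeval y (MvPolynomial.C c + ∑ v, p v * MvPolynomial.X v)
          = ∑ v, (g v - MvPolynomial.aeval y (p v)) * y v := by
        simp only [map_add, map_sum, map_mul, MvPolynomial.aeval_X, sub_mul,
          Finset.sum_sub_distrib, hg, MvPolynomial.aeval_C]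
        ring
      rw [this, pow_succ]
      exact Ideal.sum_mem _ fun v _ => Ideal.mul_mem_mul (hp v) (hy v)
  intro a
  obtain ⟨p, hp⟩ := key N a
  rw [hN, Ideal.mem_bot, sub_eq_zero] at hp
  exact ⟨p, hp.symm⟩

/-- Adapted generators of the maximal ideal. -/
lemma adapted_generators {k A : Type*} [Field k] [CommRing A] [Algebra k A]
    [FiniteDimensional k A] (J : Ideal A) (j : ℕ) (hj' : J ^ (j + 1) = ⊥)
    (n : ℕ) (hn : hilbFn k J 1 = n) :
    ∃ y : Fin n → A, (∀ v, y v ∈ J) ∧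
      (J.restrictScalars k ≤ Submodule.span k (Set.range y) ⊔ (J ^ 2).restrictScalars k) ∧
      ∀ i, 1 ≤ i → i ≤ j → ∀ v : Fin n,
        ∑ t ∈ Finset.range (j - i + 1), iaDelta k J j t 1 ≤ (v : ℕ) →
        ∀ z ∈ J ^ (i - 1), z * y v = 0 := by
  let N : Submodule k A := (J ^ 2).restrictScalars k
  let F : ℕ → Submodule k A := fun p => (iaA J 1 (p : ℤ)).restrictScalars k
  let G : ℕ → Submodule k A := fun q => (N ⊓ F (q+1)) ⊔ F q
  have hmemF : ∀ p x, x ∈ F p ↔ x ∈ J ∧ ∀ z ∈ J ^ p, z * x = 0 := by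
    intro p x
    simp only [F, iaA, Submodule.restrictScalars_mem, Submodule.mem_inf, pow_one,
      Submodule.mem_torsionBySet_iff, Int.toNat_natCast]
    simp
  have hF0 : F 0 ≤ N := by
    intro x hx
    have := ((hmemF 0 x).1 hx).2 1 (by simp)
    rw [one_mul] at this
    rw [this]; exact zero_mem _
  have hFm : Monotone F := by
    intro p q hpq x hx
    rw [hmemF] at hx ⊢
    exact ⟨hx.1, fun z hz => hx.2 z (Ideal.pow_le_pow_right hpq hz)⟩
  have hFj : F j = J.restrictScalars k := by
    ext x
    rw [hmemF, Submodule.restrictScalars_mem]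
    refine ⟨fun h => h.1, fun h => ⟨h, fun z hz => ?_⟩⟩
    have := Ideal.mul_mem_mul hz h
    rw [← pow_succ, hj'] at this
    simpa using this
  let g : ℕ → ℕ := fun q => Module.finrank k (↥(F (q+1)) ⧸ (G q).comap (F (q+1)).subtype)
  let d : ℕ → ℕ := fun p => ∑ q ∈ Finset.range p, g q
  have hdj : d j = n := by
    have := adapted_dim N F hF0 hFm j
    change d j = _ at this
    rw [this, ← hn, hilbFn, pow_one, subquotDim, hFj]
  have hDelta : ∀ q t, q + t + 1 = j → iaDelta k J j t 1 = g q := by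
    intro q t hqt
    have hc : t ≤ j ∧ t + 1 ≤ j := by omega
    rw [iaDelta, if_pos hc, iaQdim, subquotDim]
    have e1 : (j : ℤ) + 1 - ((t : ℤ) + ((1 : ℕ) : ℤ)) = ((q + 1 : ℕ) : ℤ) := by omega
    have e2 : ((q + 1 : ℕ) : ℤ) - 1 = (q : ℤ) := by omega
    rw [e1, e2]
    have e3 : (iaA J (1 + 1) ((q + 1 : ℕ) : ℤ) ⊔ iaA J 1 (q : ℤ)).restrictScalars k = G q := by
      rw [Submodule.restrictScalars_sup]
      congr 1
      ext x
      simp only [N, Submodule.mem_inf, Submodule.restrictScalars_mem, F, iaA, pow_one]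
      constructor
      · rintro ⟨h1, h2⟩
        exact ⟨h1, Ideal.pow_le_self two_ne_zero h1, h2⟩
      · rintro ⟨h1, h2, h3⟩
        exact ⟨h1, h3⟩
    rw [e3]
  have hsum : ∀ s ≤ j, ∑ t ∈ Finset.range s, iaDelta k J j t 1 + d (j - s) = d j := by
    intro s
    induction s with
    | zero => simp
    | succ s ih =>
      intro hs
      rw [Finset.sum_range_succ, hDelta (j - (s+1)) s (by omega), ← ih (by omega)]
      have : j - s = (j - (s+1)) + 1 := by omega
      rw [this]
      simp only [d, Finset.sum_range_succ]
      ring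
  obtain ⟨b, hb⟩ := adapted_family N F G hF0 hFm
    (fun q => sup_le (inf_le_left.trans le_sup_left) le_sup_right) j
  change ∀ p ≤ j, (∀ v < d p, b v ∈ F p) ∧ F p ≤ Submodule.span k (b '' Set.Iio (d p)) ⊔ N at hb
  refine ⟨fun v => b (n - 1 - v), ?_, ?_, ?_⟩
  · intro v
    have := (hb j le_rfl).1 (n - 1 - v) (by have := v.2; omega)
    exact ((hmemF _ _).1 this).1
  · rw [← hFj]
    refine (hb j le_rfl).2.trans (sup_le_sup_right (Submodule.span_mono ?_) _)
    rintro _ ⟨v, hv, rfl⟩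
    rw [Set.mem_Iio, hdj] at hv
    refine ⟨⟨n - 1 - v, by omega⟩, ?_⟩
    simp only
    congr 1
    omega
  · intro i hi hij v hv z hz
    have h1 := hsum (j - i + 1) (by omega)
    have h2 : j - (j - i + 1) = i - 1 := by omega
    rw [h2, hdj] at h1
    have h3 := (hb (i - 1) (by omega)).1 (n - 1 - v) (by have := v.2; omega)
    exact ((hmemF _ _).1 h3).2 z hz

/-- Existence of a suitable functional. -/
lemma exists_functional {k A : Type*} [Field k] [CommRing A] [Algebra k A] [IsLocalRing A]
    [FiniteDimensional k A] (j n : ℕ)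
    (hn : hilbFn k (IsLocalRing.maximalIdeal A) 1 = n) (y : Fin n → A)
    (hyJ : ∀ v, y v ∈ IsLocalRing.maximalIdeal A)
    (hspan : (IsLocalRing.maximalIdeal A).restrictScalars k ≤
      Submodule.span k (Set.range y) ⊔ (IsLocalRing.maximalIdeal A ^ 2).restrictScalars k)
    (s : A) (hs : s ≠ 0) (hsj : s ∈ IsLocalRing.maximalIdeal A ^ j) :
    ∃ φ : A →ₗ[k] k, φ s ≠ 0 ∧ (2 ≤ j → φ 1 = 0 ∧ ∀ v, φ (y v) = 0) := by
  set J := IsLocalRing.maximalIdeal A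
  by_cases h2 : 2 ≤ j
  swap
  · obtain ⟨φ, hφ, _⟩ := Submodule.exists_le_ker_of_notMem (p := (⊥ : Submodule k A)) (v := s)
      (by simpa using hs)
    exact ⟨φ, hφ, fun h => absurd h h2⟩
  have hs2 : s ∈ J ^ 2 := Ideal.pow_le_pow_right h2 hsj
  have hWJ : Submodule.span k (Set.range y) ≤ J.restrictScalars k := by
    rw [Submodule.span_le]; rintro _ ⟨v, rfl⟩; exact hyJ v
  have hNJ : (J ^ 2).restrictScalars k ≤ J.restrictScalars k :=
    fun x hx => Ideal.pow_le_self two_ne_zero hx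
  have hWN : Submodule.span k (Set.range y) ⊓ (J ^ 2).restrictScalars k = ⊥ := by
    have h3 := Submodule.finrank_sup_add_finrank_inf_eq (Submodule.span k (Set.range y))
      ((J ^ 2).restrictScalars k)
    rw [le_antisymm (sup_le hWJ hNJ) hspan] at h3
    have h4 := finrank_range_le_card (R := k) y
    rw [Set.finrank, Fintype.card_fin] at h4
    have h5 := finrank_quot_comap (J.restrictScalars k) ((J ^ 2).restrictScalars k)
    rw [inf_eq_right.2 hNJ] at h5
    have h6 : Module.finrank k (↥(J.restrictScalars k) ⧸
      ((J ^ 2).restrictScalars k).comap (J.restrictScalars k).subtype) = n := by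
      rw [← hn, hilbFn, pow_one, subquotDim]
    rw [← Submodule.finrank_eq_zero (R := k)]
    omega
  have hnot : s ∉ Submodule.span k {(1 : A)} ⊔ Submodule.span k (Set.range y) := by
    intro hmem
    obtain ⟨c', hc', w, hw, hcw⟩ := Submodule.mem_sup.1 hmem
    obtain ⟨c, rfl⟩ := Submodule.mem_span_singleton.1 hc'
    have hcJ : c • (1 : A) ∈ J := by
      have : c • (1 : A) = s - w := by rw [← hcw]; ring
      rw [this]
      exact J.sub_mem (Ideal.pow_le_self two_ne_zero hs2) (hWJ hw)
    have hc0 : c = 0 := by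
      by_contra hne
      apply (IsLocalRing.mem_maximalIdeal _).1 hcJ
      rw [← Algebra.algebraMap_eq_smul_one]
      exact (IsUnit.mk0 c hne).map (algebraMap k A)
    rw [hc0, zero_smul, zero_add] at hcw
    apply hs
    have : s ∈ Submodule.span k (Set.range y) ⊓ (J ^ 2).restrictScalars k :=
      ⟨hcw ▸ hw, hs2⟩
    rw [hWN] at this
    simpa using this
  obtain ⟨φ, hφ, hker⟩ := Submodule.exists_le_ker_of_notMem hnot
  refine ⟨φ, hφ, fun _ => ⟨?_, fun v => ?_⟩⟩
  · exact hker (Submodule.mem_sup_left (Submodule.mem_span_singleton_self _))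
  · exact hker (Submodule.mem_sup_right (Submodule.subset_span ⟨v, rfl⟩))

/-- Nondegeneracy of the pairing. -/
lemma pairing_nondeg {k A : Type*} [Field k] [CommRing A] [Algebra k A] (J : Ideal A)
    [FiniteDimensional k A]
    (hsoc : Module.finrank k
      ↥((Submodule.torsionBySet A A (J : Set A)).restrictScalars k) = 1)
    (N : ℕ) (hN : J ^ N = ⊥) (s : A) (hs : s ≠ 0) (hsJ : ∀ z ∈ J, z * s = 0)
    (φ : A →ₗ[k] k) (hφ : φ s ≠ 0) (a : A) (ha : ∀ b, φ (a * b) = 0) : a = 0 := by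
  by_contra hne
  have key : ∀ i : ℕ, ∃ c ∈ J ^ i, a * c ≠ 0 := by
    intro i
    induction i with
    | zero => exact ⟨1, by simp, by simpa using hne⟩
    | succ i ih =>
      obtain ⟨c, hc, hac⟩ := ih
      by_contra hcon
      push Not at hcon
      have hmem : ∀ x : A, x ∈ (Submodule.torsionBySet A A (J : Set A)).restrictScalars k ↔
          ∀ z ∈ J, z * x = 0 := by
        intro x
        rw [Submodule.restrictScalars_mem, Submodule.mem_torsionBySet_iff]
        simp
      have h1 : a * c ∈ (Submodule.torsionBySet A A (J : Set A)).restrictScalars k := by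
        rw [hmem]
        intro z hz
        have := hcon (c * z) (by rw [pow_succ]; exact Ideal.mul_mem_mul hc hz)
        rw [← this]; ring
      have h2 := (hmem s).2 hsJ
      obtain ⟨r, hr⟩ := (finrank_eq_one_iff_of_nonzero' (⟨s, h2⟩ :
        ↥((Submodule.torsionBySet A A (J : Set A)).restrictScalars k))
        (by simpa [Subtype.ext_iff] using hs)).1 hsoc ⟨a * c, h1⟩
      have hr' : r • s = a * c := congrArg Subtype.val hr
      have h3 := ha c
      rw [← hr', map_smul, smul_eq_mul] at h3
      rcases mul_eq_zero.1 h3 with h | h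
      · apply hac; rw [← hr', h, zero_smul]
      · exact hφ h
  obtain ⟨c, hc, hac⟩ := key N
  rw [hN, Ideal.mem_bot] at hc
  exact hac (by rw [hc, mul_zero])

/-- **Standard form of a dual socle generator.** Let `k` be a field of
characteristic zero and `(A, 𝔪)` a finite local Gorenstein `k`-algebra of socle degree
`j` with `n = h_A(1) = dim_k 𝔪/𝔪²`. Let `Δ` be the Hilbert function decomposition of `A`
and `e(i) = Σ_{t=0}^{i} Δ_t(1)`. Then there exists `f = f₀ + f₁ + ⋯ + f_j ∈ k[x₁,…,xₙ]`
with each `f_i` homogeneous of degree `i`, such that `A ≅ k[y₁,…,yₙ]/Ann(f)` as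
`k`-algebras and `f_i` involves only the first `e(j-i)` variables, for every `i`;
moreover, if `j ≥ 2` one can additionally take `f₀ = f₁ = 0`. -/
theorem deformations_stmt16 {k A : Type*} [Field k] [CharZero k]
    [CommRing A] [Algebra k A] [IsLocalRing A] [FiniteDimensional k A]
    -- the residue field A/𝔪 is k
    (hres : Function.Bijective (algebraMap k (IsLocalRing.ResidueField A)))
    -- the socle soc(A) has k-dimension 1 (A is Gorenstein)
    (hsoc : Module.finrank k
      ↥((Submodule.torsionBySet A A
          ((IsLocalRing.maximalIdeal A : Ideal A) : Set A)).restrictScalars k) = 1)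
    -- j is the socle degree of A
    (j : ℕ) (hj : IsLocalRing.maximalIdeal A ^ j ≠ ⊥)
    (hj' : IsLocalRing.maximalIdeal A ^ (j + 1) = ⊥)
    -- n = h_A(1) = dim_k 𝔪/𝔪²
    (n : ℕ) (hn : hilbFn k (IsLocalRing.maximalIdeal A) 1 = n) :
    ∃ fc : ℕ → MvPolynomial (Fin n) k,
      -- fc i is the homogeneous degree-i component f_i of f = f₀ + ⋯ + f_j
      (∀ i : ℕ, (fc i).IsHomogeneous i) ∧
      -- f_i ∈ k[x₁,…,x_{e(j-i)}], where e(i) = Σ_{t=0}^{i} Δ_t(1)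
      (∀ i : ℕ, fc i ∈ MvPolynomial.supported k
        {v : Fin n | (v : ℕ) <
          ∑ t ∈ Finset.range (j - i + 1), iaDelta k (IsLocalRing.maximalIdeal A) j t 1}) ∧
      -- if j ≥ 2 then f₀ = f₁ = 0
      (2 ≤ j → fc 0 = 0 ∧ fc 1 = 0) ∧
      -- A is isomorphic to the apolar algebra of f
      (∃ I : Ideal (MvPolynomial (Fin n) k),
        (I : Set (MvPolynomial (Fin n) k)) =
          {D | apolar D (∑ i ∈ Finset.range (j + 1), fc i) = 0} ∧
        Nonempty ((MvPolynomial (Fin n) k ⧸ I) ≃ₐ[k] A)) := by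

  classical
  obtain ⟨y, hyJ, hspan, hann⟩ := adapted_generators (k := k) (IsLocalRing.maximalIdeal A) j hj' n hn
  obtain ⟨s, hsj, hs⟩ := Submodule.exists_mem_ne_zero_of_ne_bot hj
  obtain ⟨φ, hφ, hφ2⟩ := exists_functional (k := k) j n hn y hyJ hspan s hs hsj
  set J := IsLocalRing.maximalIdeal A with hJdef
  have hsJ : ∀ z ∈ J, z * s = 0 := by
    intro z hz
    have := Ideal.mul_mem_mul hsj hz
    rw [← pow_succ, hj', Ideal.mem_bot] at this
    rw [mul_comm]; exact this
  have hk : ∀ a : A, ∃ c : k, a - algebraMap k A c ∈ J := by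
    intro a
    obtain ⟨c, hc⟩ := hres.2 (IsLocalRing.residue A a)
    refine ⟨c, ?_⟩
    rw [hJdef, ← IsLocalRing.residue_eq_zero_iff, map_sub, ← hc, sub_eq_zero]
    rfl
  have hgen : J ≤ Ideal.span (Set.range y) := by
    have : IsNoetherian A A := isNoetherian_of_tower k inferInstance
    apply Submodule.le_of_le_smul_of_le_jacobson_bot (I := J) (IsNoetherian.noetherian J)
    · exact IsLocalRing.maximalIdeal_le_jacobson ⊥
    · intro x hx
      obtain ⟨w, hw, z, hz, rfl⟩ := Submodule.mem_sup.1 (hspan hx)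
      refine Submodule.add_mem_sup ?_ ?_
      · exact Submodule.span_le_restrictScalars k A _ hw
      · rw [smul_eq_mul, ← pow_two]; exact hz
  have hsurj := aeval_surj (k := k) J (j+1) hj' hk y hyJ hgen
  let fc : ℕ → MvPolynomial (Fin n) k := fun i => if i ≤ j then
    ∑ a ∈ Finset.univ.finsuppAntidiag i, MvPolynomial.monomial a (dualCoeff y φ a) else 0
  have hcoeff : ∀ i a, (fc i).coeff a = if i ≤ j ∧ ∑ v, a v = i then dualCoeff y φ a else 0 := by
    intro i a
    by_cases hi : i ≤ j
    · simp only [fc, hi, if_true, MvPolynomial.coeff_sum, MvPolynomial.coeff_monomial,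
        Finset.sum_ite_eq', Finset.mem_finsuppAntidiag, true_and]
      simp
    · simp [fc, hi]
  have hf : ∀ a, (∑ i ∈ Finset.range (j + 1), fc i).coeff a = dualCoeff y φ a := by
    intro a
    rw [MvPolynomial.coeff_sum]
    by_cases ha : ∑ v, a v ≤ j
    · rw [Finset.sum_eq_single (∑ v, a v)]
      · rw [hcoeff, if_pos ⟨ha, rfl⟩]
      · intro i _ hi
        rw [hcoeff, if_neg (fun h => hi h.2.symm)]
      · intro h; exact absurd (Finset.mem_range.2 (by omega)) h
    · rw [Finset.sum_eq_zero]
      · have h1 := Ideal.pow_le_pow_right (show j + 1 ≤ ∑ v, a v by omega) (monY_mem y J hyJ a)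
        rw [hj', Ideal.mem_bot] at h1
        rw [dualCoeff, h1, map_zero, zero_div]
      · intro i _
        rw [hcoeff, if_neg (fun h => by omega)]
  refine ⟨fc, ?_, ?_, ?_, ?_⟩
  · intro i a ha
    rw [hcoeff] at ha
    have h1 : i ≤ j ∧ ∑ v, a v = i := by
      by_contra h
      exact ha (if_neg h)
    rw [← h1.2, Finsupp.weight_apply, Finsupp.sum_fintype] <;> simp
  · intro i
    rw [MvPolynomial.mem_supported]
    intro v hv
    obtain ⟨a, ha, hva⟩ := (MvPolynomial.mem_vars_iff_mem_support v).1 (Finset.mem_coe.1 hv)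
    rw [MvPolynomial.mem_support_iff, hcoeff] at ha
    have h1 : i ≤ j ∧ ∑ v, a v = i := by
      by_contra h
      exact ha (if_neg h)
    rw [if_pos h1] at ha
    rw [Set.mem_ofPred_eq]
    by_contra hlt
    push Not at hlt
    apply ha
    have hav : a v ≠ 0 := Finsupp.mem_support_iff.1 hva
    have hsplit : a = (a - Finsupp.single v 1) + Finsupp.single v 1 := by
      rw [tsub_add_cancel_of_le]
      rw [Finsupp.single_le_iff]; omega
    have hdeg : ∑ w, (a - Finsupp.single v 1 : Fin n →₀ ℕ) w + 1 = i := by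
      rw [← h1.2]
      conv_rhs => rw [hsplit]
      simp [Finset.sum_add_distrib, Finsupp.single_apply, -Finsupp.coe_tsub]
    have h2 := monY_mem y J hyJ (a - Finsupp.single v 1)
    have h3 : monY y a = 0 := by
      rw [hsplit, monY_add, monY_single]
      apply hann i (by omega) h1.1 v hlt
      have : ∑ w, (a - Finsupp.single v 1 : Fin n →₀ ℕ) w = i - 1 := by omega
      rw [← this]; exact h2
    rw [dualCoeff, h3, map_zero, zero_div]
  · intro h2
    obtain ⟨hφ1, hφy⟩ := hφ2 h2
    constructor
    · ext a
      rw [hcoeff]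
      split_ifs with h
      · have ha : a = 0 := by
          ext v
          have := Finset.sum_eq_zero_iff.1 h.2 v (Finset.mem_univ v)
          simpa using this
        rw [ha, dualCoeff]
        simp [monY, hφ1]
      · simp
    · ext a
      rw [hcoeff]
      split_ifs with h
      · obtain ⟨v, rfl⟩ : ∃ v, a = Finsupp.single v 1 := by
          rw [← Finsupp.sum_eq_one_iff, Finsupp.sum_fintype _ _ (fun _ => rfl)]
          exact h.2
        rw [dualCoeff, monY_single, hφy]
        simp
      · simp
  · refine ⟨RingHom.ker (MvPolynomial.aeval (R := k) y), ?_,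
      ⟨Ideal.quotientKerAlgEquivOfSurjective hsurj⟩⟩
    ext D
    rw [SetLike.mem_coe, RingHom.mem_ker, Set.mem_ofPred_eq]
    constructor
    · intro hD
      ext c
      rw [coeff_apolar_dual y φ D _ hf, hD]
      simp
    · intro hD
      apply pairing_nondeg J hsoc (j+1) hj' s hs hsJ φ hφ
      intro b
      obtain ⟨p, rfl⟩ := hsurj b
      rw [aeval_eq_monY y p, Finset.mul_sum, map_sum]
      refine Finset.sum_eq_zero fun c _ => ?_
      have h1 := coeff_apolar_dual y φ D _ hf c
      rw [hD, MvPolynomial.coeff_zero, eq_comm, div_eq_zero_iff] at h1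
      rw [mul_smul_comm, map_smul]
      rcases h1 with h1 | h1
      · rw [h1, smul_zero]
      · exact absurd h1 (Finset.prod_ne_zero_iff.2 fun v _ =>
          Nat.cast_ne_zero.2 (Nat.factorial_ne_zero _))
end

section
/- Let k be a field of characteristic zero, S = k[x₁,…,xₙ], and T = S[X] = k[x₁,…,xₙ,X]. Let f ∈ S and ∂ ∈ k[y₁,…,yₙ] be such that ∂² ∘ f = 0, let m ≥ 2 be a natural number, and set g := f + X^m·(∂ ∘ f) ∈ T. Then, in the polynomial ring k[y₁,…,yₙ,α] acting on T (with α acting as ∂/∂X), the apolar ideal of g is Ann(g) = k[y,α]·Ann_{k[y]}(f) + k[y,α]·α·Ann_{k[y]}(∂ ∘ f) + (α^m − m!·∂), where the first two summands are the extensions of the ideals Ann_{k[y]}(f) and α·Ann_{k[y]}(∂ ∘ f). -/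
theorem descFac_mul_aux (e b a : ℕ) :
    (e - b).descFactorial a * e.descFactorial b = e.descFactorial (b + a) := by
  induction a with
  | zero => simp
  | succ a ih =>
    rw [← add_assoc, Nat.descFactorial_succ, Nat.descFactorial_succ, ← ih, Nat.sub_sub, mul_assoc]

open MvPolynomial in
theorem mon_rename {k : Type*} [Field k] {n : ℕ} (i : ℕ) (a : Fin n →₀ ℕ) (c : k) :
    X (Fin.last n) ^ i * rename Fin.castSucc (monomial a c) =
      monomial (Finsupp.single (Fin.last n) i + a.mapDomain Fin.castSucc) c := by
  rw [rename_monomial, X_pow_eq_monomial, monomial_mul, one_mul]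

theorem mapDom_last {n : ℕ} (a : Fin n →₀ ℕ) :
    a.mapDomain Fin.castSucc (Fin.last n) = 0 :=
  Finsupp.mapDomain_notin_range _ _ (by simp)

theorem mapDom_cs {n : ℕ} (a : Fin n →₀ ℕ) (i : Fin n) :
    a.mapDomain Fin.castSucc i.castSucc = a i :=
  Finsupp.mapDomain_apply (Fin.castSucc_injective n) _ _

open MvPolynomial in
noncomputable def apB (k : Type*) [Field k] (n : ℕ) :
    MvPolynomial (Fin n) k →ₗ[k] MvPolynomial (Fin n) k →ₗ[k] MvPolynomial (Fin n) k :=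
  (basisMonomials (Fin n) k).constr k fun a =>
    (basisMonomials (Fin n) k).constr k fun b =>
      monomial (b - a) (∏ i : Fin n, ((b i).descFactorial (a i) : k))

open MvPolynomial in
theorem apB_mon {k : Type*} [Field k] {n : ℕ} (a b : Fin n →₀ ℕ) (c d : k) :
    apB k n (monomial a c) (monomial b d) =
      monomial (b - a) (c * d * ∏ i : Fin n, ((b i).descFactorial (a i) : k)) := by
  have ha : (monomial a c : MvPolynomial (Fin n) k) = c • basisMonomials (Fin n) k a := by
    simp [smul_monomial]
  have hb : (monomial b d : MvPolynomial (Fin n) k) = d • basisMonomials (Fin n) k b := by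
    simp [smul_monomial]
  rw [ha, hb, map_smul, map_smul, LinearMap.smul_apply, apB, Module.Basis.constr_basis,
    Module.Basis.constr_basis, smul_monomial, smul_monomial]
  simp only [smul_eq_mul]
  congr 1
  ring

open MvPolynomial in
theorem apolar_eq {k : Type*} [Field k] {n : ℕ} (D f : MvPolynomial (Fin n) k) :
    apolar D f = apB k n D f := by
  conv_rhs => rw [D.as_sum, f.as_sum]
  simp only [map_sum, LinearMap.sum_apply, apB_mon]
  rw [apolar, Finset.sum_comm]

open MvPolynomial in
theorem apB_mul {k : Type*} [Field k] {n : ℕ} (p q f : MvPolynomial (Fin n) k) :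
    apB k n (p * q) f = apB k n p (apB k n q f) := by
  induction p using MvPolynomial.induction_on' with
  | add p₁ p₂ h₁ h₂ => simp only [add_mul, map_add, LinearMap.add_apply, h₁, h₂]
  | monomial a c =>
  induction q using MvPolynomial.induction_on' with
  | add p₁ p₂ h₁ h₂ => simp only [mul_add, map_add, LinearMap.add_apply, h₁, h₂]
  | monomial b d =>
  induction f using MvPolynomial.induction_on' with
  | add p₁ p₂ h₁ h₂ => simp only [map_add, h₁, h₂]
  | monomial e u =>
  rw [monomial_mul, apB_mon, apB_mon, apB_mon]
  have h : e - (a + b) = e - b - a := by rw [add_comm, tsub_add_eq_tsub_tsub]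
  have h2 : ∏ i : Fin n, ((e i).descFactorial ((a + b) i) : k) =
      (∏ i : Fin n, ((e i).descFactorial (b i) : k)) *
       ∏ i : Fin n, (((e - b) i).descFactorial (a i) : k) := by
    rw [← Finset.prod_mul_distrib]
    refine Finset.prod_congr rfl fun i _ => ?_
    rw [← Nat.cast_mul]
    congr 1
    rw [Finsupp.add_apply, Finsupp.tsub_apply, add_comm, mul_comm]
    exact (descFac_mul_aux (e i) (b i) (a i)).symm
  rw [h, h2]
  congr 1
  ring
open MvPolynomial in
theorem apB_main {k : Type*} [Field k] {n : ℕ} (i j : ℕ) (p q : MvPolynomial (Fin n) k) :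
    apB k (n+1) (X (Fin.last n) ^ i * rename Fin.castSucc p)
      (X (Fin.last n) ^ j * rename Fin.castSucc q) =
    C (j.descFactorial i : k) * X (Fin.last n) ^ (j - i) * rename Fin.castSucc (apB k n p q) := by
  induction p using MvPolynomial.induction_on' with
  | add p₁ p₂ h₁ h₂ => simp only [mul_add, map_add, LinearMap.add_apply, h₁, h₂]
  | monomial a c =>
  induction q using MvPolynomial.induction_on' with
  | add p₁ p₂ h₁ h₂ => simp only [mul_add, map_add, h₁, h₂]
  | monomial b d =>
  rw [mon_rename, mon_rename, apB_mon, apB_mon, mul_assoc (C _), mon_rename, C_mul_monomial]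
  have h : Finsupp.single (Fin.last n) j + b.mapDomain Fin.castSucc
      - (Finsupp.single (Fin.last n) i + a.mapDomain Fin.castSucc) =
      Finsupp.single (Fin.last n) (j - i) + (b - a).mapDomain Fin.castSucc := by
    ext t
    refine Fin.lastCases ?_ (fun t => ?_) t
    · simp [mapDom_last]
    · simp [mapDom_cs]
  rw [h, Fin.prod_univ_castSucc]
  congr 1
  simp [mapDom_last, mapDom_cs]
  ring

open MvPolynomial in
noncomputable def evH (k : Type*) [Field k] (n : ℕ) :
    Polynomial (MvPolynomial (Fin n) k) →+* MvPolynomial (Fin (n + 1)) k :=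
  Polynomial.eval₂RingHom (rename Fin.castSucc).toRingHom (X (Fin.last n))

open MvPolynomial in
theorem evH_surj {k : Type*} [Field k] {n : ℕ} (e : MvPolynomial (Fin (n + 1)) k) :
    ∃ P, evH k n P = e := by
  induction e using MvPolynomial.induction_on with
  | C a => exact ⟨Polynomial.C (C a), by simp [evH]⟩
  | add p q hp hq =>
    obtain ⟨P, rfl⟩ := hp
    obtain ⟨Q, rfl⟩ := hq
    exact ⟨P + Q, map_add _ _ _⟩
  | mul_X p i hp =>
    obtain ⟨P, rfl⟩ := hp
    refine Fin.lastCases ?_ (fun t => ?_) i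
    · exact ⟨P * Polynomial.X, by simp [evH]⟩
    · exact ⟨P * Polynomial.C (X t), by simp [evH]⟩

open MvPolynomial in
noncomputable def psiH (k : Type*) [Field k] (n : ℕ) :
    MvPolynomial (Fin (n + 1)) k →ₐ[k] Polynomial (MvPolynomial (Fin n) k) :=
  aeval (Fin.lastCases Polynomial.X fun t => Polynomial.C (X t))

open MvPolynomial in
theorem psiH_last {k : Type*} [Field k] {n : ℕ} :
    psiH k n (X (Fin.last n)) = Polynomial.X := by
  simp [psiH]

open MvPolynomial in
theorem psiH_rename {k : Type*} [Field k] {n : ℕ} (p : MvPolynomial (Fin n) k) :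
    psiH k n (rename Fin.castSucc p) = Polynomial.C p := by
  induction p using MvPolynomial.induction_on with
  | C a => simp [psiH]
  | add p q hp hq => simp only [map_add, hp, hq]
  | mul_X p i hp => simp only [map_mul, hp]; simp [psiH]

open MvPolynomial in
theorem psiH_term {k : Type*} [Field k] {n : ℕ} (c : ℕ) (j : ℕ) (p : MvPolynomial (Fin n) k) :
    psiH k n (C (c : k) * X (Fin.last n) ^ j * rename Fin.castSucc p) =
      Polynomial.monomial j ((c : MvPolynomial (Fin n) k) * p) := by
  rw [map_mul, map_mul, map_pow, psiH_last, psiH_rename, ← Polynomial.C_mul_X_pow_eq_monomial]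
  have : psiH k n (C (c : k)) = Polynomial.C (c : MvPolynomial (Fin n) k) := by simp
  rw [this, map_mul]
  ring

/-- Let `k` be a field of characteristic zero, `S = k[x₁,…,xₙ]` and
`T = S[X] = k[x₁,…,xₙ,X]`. Let `f ∈ S` and `∂ ∈ k[y₁,…,yₙ]` with `∂² ∘ f = 0`, let
`m ≥ 2`, and set `g = f + X^m·(∂ ∘ f)`. Then in `k[y₁,…,yₙ,α]`, acting on `T` with `α`
acting as `∂/∂X`, the apolar ideal of `g` is
`Ann(g) = k[y,α]·Ann_{k[y]}(f) + k[y,α]·α·Ann_{k[y]}(∂ ∘ f) + (α^m − m!·∂)`.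

Here `k[x₁,…,xₙ,X] = k[x₁,…,xₙ₊₁]` with `X = xₙ₊₁` and `k[y₁,…,yₙ,α] = k[y₁,…,yₙ₊₁]`
with `α = yₙ₊₁`, the inclusion `k[y₁,…,yₙ] → k[y₁,…,yₙ,α]` being `rename Fin.castSucc`. -/
theorem deformations_stmt17 {k : Type*} [Field k] [CharZero k] {n : ℕ}
    (f D : MvPolynomial (Fin n) k)
    (hD : apolar (D * D) f = 0)
    (m : ℕ) (hm : 2 ≤ m)
    (g : MvPolynomial (Fin (n + 1)) k)
    (hg : g = MvPolynomial.rename Fin.castSucc f +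
      (MvPolynomial.X (Fin.last n)) ^ m *
        MvPolynomial.rename Fin.castSucc (apolar D f)) :
    {e : MvPolynomial (Fin (n + 1)) k | apolar e g = 0} =
      ↑(Ideal.span
        ((MvPolynomial.rename (Fin.castSucc : Fin n → Fin (n + 1)) ''
            {e : MvPolynomial (Fin n) k | apolar e f = 0}) ∪
         ((fun e : MvPolynomial (Fin n) k =>
            MvPolynomial.X (Fin.last n) * MvPolynomial.rename Fin.castSucc e) ''
            {e : MvPolynomial (Fin n) k | apolar e (apolar D f) = 0}) ∪
         {(MvPolynomial.X (Fin.last n)) ^ m -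
            MvPolynomial.C ((m.factorial : k)) * MvPolynomial.rename Fin.castSucc D})) := by
  classical
  simp only [apolar_eq] at *
  set h := apB k n D f with hh
  have hDh : apB k n D h = 0 := by rw [hh, ← apB_mul, hD]
  -- the action of a basic term on g
  have key : ∀ (i : ℕ) (p : MvPolynomial (Fin n) k),
      apB k (n+1) (MvPolynomial.X (Fin.last n) ^ i * MvPolynomial.rename Fin.castSucc p) g =
      MvPolynomial.C ((Nat.descFactorial 0 i : ℕ) : k) * MvPolynomial.X (Fin.last n) ^ (0 - i)
        * MvPolynomial.rename Fin.castSucc (apB k n p f) +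
      MvPolynomial.C ((m.descFactorial i : ℕ) : k) * MvPolynomial.X (Fin.last n) ^ (m - i)
        * MvPolynomial.rename Fin.castSucc (apB k n p h) := by
    intro i p
    rw [hg, map_add, apB_main]
    congr 1
    rw [← apB_main, pow_zero, one_mul]
  set I := Ideal.span
        ((MvPolynomial.rename (Fin.castSucc : Fin n → Fin (n + 1)) ''
            {e : MvPolynomial (Fin n) k | apB k n e f = 0}) ∪
         ((fun e : MvPolynomial (Fin n) k =>
            MvPolynomial.X (Fin.last n) * MvPolynomial.rename Fin.castSucc e) ''
            {e : MvPolynomial (Fin n) k | apB k n e h = 0}) ∪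
         {(MvPolynomial.X (Fin.last n)) ^ m -
            MvPolynomial.C ((m.factorial : k)) * MvPolynomial.rename Fin.castSucc D}) with hI
  have hIA : ∀ e ∈ I, apB k (n+1) e g = 0 := by
    intro e he
    rw [hI] at he
    induction he using Submodule.span_induction with
    | zero => simp
    | add x y _ _ hx hy => rw [map_add, LinearMap.add_apply, hx, hy, add_zero]
    | smul a x _ hx => rw [smul_eq_mul, apB_mul, hx, map_zero]
    | mem x hx =>
      rcases hx with (⟨p, hp, rfl⟩ | ⟨p, hp, rfl⟩) | hx
      · have := key 0 p
        have hp : apB k n p f = 0 := hp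
        have hph : apB k n p h = 0 := by rw [hh, ← apB_mul, mul_comm, apB_mul, hp, map_zero]
        simpa [hp, hph] using this
      · have := key 1 p
        have hp : apB k n p h = 0 := hp
        simpa [hp] using this
      · rw [Set.mem_singleton_iff] at hx
        subst hx
        have h1 := key m 1
        have h2 := key 0 D
        have e1 : ∀ q, apB k n 1 q = q := by
          intro q
          induction q using MvPolynomial.induction_on' with
          | add p₁ p₂ h₁ h₂ => rw [map_add, h₁, h₂]
          | monomial a c =>
            rw [← MvPolynomial.C_1, MvPolynomial.C_apply, apB_mon]
            simp
        rw [map_sub, LinearMap.sub_apply, MvPolynomial.C_mul', map_smul, LinearMap.smul_apply]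
        rw [pow_zero, one_mul] at h2
        rw [map_one, mul_one] at h1
        have hm0 : Nat.descFactorial 0 m = 0 := Nat.descFactorial_of_lt (by omega)
        rw [h1, h2, hDh, e1, e1, ← hh, hm0, Nat.descFactorial_self]
        rw [← MvPolynomial.C_mul']
        simp
  ext e
  simp only [Set.mem_setOf_eq, SetLike.mem_coe]
  refine ⟨fun he => ?_, hIA e⟩
  obtain ⟨P, rfl⟩ := evH_surj e
  set M : Polynomial (MvPolynomial (Fin n) k) :=
    Polynomial.X ^ m - Polynomial.C (MvPolynomial.C (m.factorial : k) * D) with hM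
  have hmon : M.Monic := Polynomial.monic_X_pow_sub_C _ (by omega)
  have hdeg : M.natDegree = m := Polynomial.natDegree_X_pow_sub_C
  set r := P %ₘ M with hr
  have hrdeg : r.natDegree < m := by
    rw [← hdeg]
    refine Polynomial.natDegree_modByMonic_lt _ hmon ?_
    intro h1
    rw [h1, Polynomial.natDegree_one] at hdeg
    omega
  have hP : P = r + M * (P /ₘ M) := (Polynomial.modByMonic_add_div P M).symm
  have hMI : evH k n M ∈ I := by
    refine Ideal.subset_span (Or.inr ?_)
    simp [hM, evH]
  have hMI' : evH k n (M * (P /ₘ M)) ∈ I := by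
    rw [map_mul]
    exact I.mul_mem_right _ hMI
  rw [hP, map_add] at he ⊢
  rw [map_add, LinearMap.add_apply, hIA _ hMI', add_zero] at he
  refine I.add_mem ?_ hMI'
  have hrs : evH k n r = ∑ i ∈ Finset.range m,
      MvPolynomial.X (Fin.last n) ^ i * MvPolynomial.rename Fin.castSucc (r.coeff i) := by
    conv_lhs => rw [r.as_sum_range' m hrdeg]
    rw [map_sum]
    refine Finset.sum_congr rfl fun i _ => ?_
    simp [evH, mul_comm]
  rw [hrs] at he ⊢
  rw [map_sum, LinearMap.sum_apply] at he
  simp only [key] at he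
  have he2 := congrArg (psiH k n) he
  simp only [map_sum, map_add, psiH_term, map_zero] at he2
  have hco : ∀ j, ∑ i ∈ Finset.range m,
      ((if 0 - i = j then ((Nat.descFactorial 0 i : ℕ) : MvPolynomial (Fin n) k)
          * apB k n (r.coeff i) f else 0) +
       (if m - i = j then ((m.descFactorial i : ℕ) : MvPolynomial (Fin n) k)
          * apB k n (r.coeff i) h else 0)) = 0 := by
    intro j
    have := congrArg (fun p => Polynomial.coeff p j) he2
    simpa only [Polynomial.finset_sum_coeff, Polynomial.coeff_add, Polynomial.coeff_monomial,
      Polynomial.coeff_zero] using this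
  refine I.sum_mem fun i hi => ?_
  rw [Finset.mem_range] at hi
  rcases Nat.eq_zero_or_pos i with rfl | hpos
  · have h0 := hco 0
    rw [Finset.sum_eq_single 0] at h0
    · have : m - 0 ≠ 0 := by omega
      rw [if_neg this] at h0
      refine Ideal.subset_span (Or.inl (Or.inl ⟨r.coeff 0, ?_, by simp⟩))
      simpa using h0
    · intro i hi hi0
      rw [Finset.mem_range] at hi
      rw [if_neg (show ¬ (m - i = 0) by omega), Nat.descFactorial_of_lt (by omega)]
      simp
    · intro h; exact absurd (Finset.mem_range.2 (by omega)) h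
  · have h0 := hco (m - i)
    rw [Finset.sum_eq_single i] at h0
    · rw [if_neg (show ¬ (0 - i = m - i) by omega), if_pos rfl, zero_add] at h0
      have hne : ((m.descFactorial i : ℕ) : MvPolynomial (Fin n) k) ≠ 0 := by
        rw [Nat.cast_ne_zero, Ne, Nat.descFactorial_eq_zero_iff_lt]
        omega
      have h3 : apB k n (r.coeff i) h = 0 := (mul_eq_zero.1 h0).resolve_left hne
      obtain ⟨t, rfl⟩ : ∃ t, i = t + 1 := ⟨i - 1, by omega⟩
      rw [pow_succ, mul_assoc]
      exact I.mul_mem_left _ (Ideal.subset_span (Or.inl (Or.inr ⟨r.coeff (t+1), h3, rfl⟩)))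
    · intro j hj hji
      rw [Finset.mem_range] at hj
      rw [if_neg (show ¬ (m - j = m - i) by omega), if_neg (show ¬ (0 - j = m - i) by omega),
        add_zero]
    · intro h; exact absurd (Finset.mem_range.2 hi) h
end
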